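/- arXiv:2508.05885 — 9 statements merged into one kernel-verified Lean document; each statement's English description precedes it below -/
import Mathlib

section
/- Let J be a 2-step complex structure on a 2-step nilpotent Lie algebra 𝔫 such that (𝔫,J) has no complex abelian factor. If 𝔷₀ is any J-invariant ideal of 𝔫 with 𝔫'⊆𝔷₀⊆𝔷, then 𝔷₀ = 𝔫' + J𝔫'. -/
variable {L : Type*} [LieRing L] [LieAlgebra ℝ L]

/-- A complex structure on a real Lie algebra: `J² = -1` and vanishing Nijenhuis tensor. -/
def IsComplexStructure (J : L →ₗ[ℝ] L) : Prop :=
  (∀ x : L, J (J x) = -x) ∧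
    ∀ x y : L, ⁅x, y⁆ + J (⁅J x, y⁆ + ⁅x, J y⁆) - ⁅J x, J y⁆ = 0

/-- Right bracket by `y`, as a linear map `x ↦ ⁅x, y⁆`. -/
def bracketRight (y : L) : L →ₗ[ℝ] L where
  toFun x := ⁅x, y⁆
  map_add' a b := add_lie a b y
  map_smul' r a := smul_lie r a y

/-- The ascending series `𝔞_ℓ(J)` associated to a complex structure `J`. -/
def aSeries (J : L →ₗ[ℝ] L) : ℕ → Submodule ℝ L
  | 0 => ⊥
  | n + 1 =>
    (⨅ y : L, (aSeries J n).comap (bracketRight y)) ⊓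
      (⨅ y : L, (aSeries J n).comap ((bracketRight y).comp J))

/-- The commutator ideal `𝔫' = [𝔫,𝔫]`. -/
def commutatorIdeal (L : Type*) [LieRing L] [LieAlgebra ℝ L] : LieIdeal ℝ L :=
  ⁅(⊤ : LieIdeal ℝ L), (⊤ : LieIdeal ℝ L)⁆

/-- `(𝔫, J)` has no complex abelian factor. -/
def HasNoComplexAbelianFactor (J : L →ₗ[ℝ] L) : Prop :=
  ∀ a n₁ : LieIdeal ℝ L,
    Submodule.map J (a : Submodule ℝ L) ≤ (a : Submodule ℝ L) →
    ⁅a, a⁆ = (⊥ : LieIdeal ℝ L) →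
    Submodule.map J (n₁ : Submodule ℝ L) ≤ (n₁ : Submodule ℝ L) →
    IsCompl (a : Submodule ℝ L) (n₁ : Submodule ℝ L) →
    a = ⊥

/-- for a 2-step complex structure without complex abelian factor, any
`J`-invariant ideal squeezed between `𝔫'` and `𝔷` equals `𝔫' + J𝔫'`. -/
theorem j_invariant_ideal_eq_commutator_sup_J_commutator
    (h2 : commutatorIdeal L ≤ LieAlgebra.center ℝ L)
    (hna : commutatorIdeal L ≠ ⊥)
    (J : L →ₗ[ℝ] L) (hJ : IsComplexStructure J)
    (hJ2 : Submodule.map J (commutatorIdeal L : Submodule ℝ L) ≤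
      (LieAlgebra.center ℝ L : Submodule ℝ L))
    (hfac : HasNoComplexAbelianFactor J)
    (z₀ : LieIdeal ℝ L)
    (hz₀J : Submodule.map J (z₀ : Submodule ℝ L) ≤ (z₀ : Submodule ℝ L))
    (hz₀l : commutatorIdeal L ≤ z₀) (hz₀u : z₀ ≤ LieAlgebra.center ℝ L) :
    (z₀ : Submodule ℝ L) =
      (commutatorIdeal L : Submodule ℝ L) ⊔
        Submodule.map J (commutatorIdeal L : Submodule ℝ L) := by
  obtain ⟨hJJ, -⟩ := hJ
  have hcomm : ∀ u v : L, ⁅u, v⁆ ∈ commutatorIdeal L := fun u v =>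
    LieSubmodule.lie_mem_lie (LieSubmodule.mem_top u) (LieSubmodule.mem_top v)
  set M : Submodule ℝ L := (commutatorIdeal L : Submodule ℝ L) ⊔
        Submodule.map J (commutatorIdeal L : Submodule ℝ L) with hM
  have hMJ : ∀ m ∈ M, J m ∈ M := by
    intro m hm
    obtain ⟨a, ha, b, hb, rfl⟩ := Submodule.mem_sup.1 hm
    obtain ⟨c, hc, rfl⟩ := hb
    rw [map_add, hJJ]
    exact M.add_mem (Submodule.mem_sup_right ⟨a, ha, rfl⟩)
      (M.neg_mem (Submodule.mem_sup_left hc))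
  apply le_antisymm
  · intro x hx
    by_contra hxM
    have hx1 : x ∉ M ⊔ Submodule.span ℝ {J x} := by
      intro h
      obtain ⟨m, hm, b, hb, hmb⟩ := Submodule.mem_sup.1 h
      obtain ⟨c, rfl⟩ := Submodule.mem_span_singleton.1 hb
      have h1 : m + c • J m = (1 + c ^ 2) • x := by
        have e : m = x - c • J x := eq_sub_of_add_eq hmb
        rw [e]
        simp only [map_sub, map_smul, hJJ]
        module
      have h2 : (1 + c ^ 2) • x ∈ M := h1 ▸ M.add_mem hm (M.smul_mem c (hMJ m hm))
      exact hxM ((M.smul_mem_iff (by positivity)).1 h2)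
    obtain ⟨f0, hf0x, hf0⟩ := Submodule.exists_le_ker_of_notMem hx1
    obtain ⟨f, hfx, hf⟩ : ∃ f : L →ₗ[ℝ] ℝ, f x = 1 ∧ ∀ y ∈ M ⊔ Submodule.span ℝ {J x}, f y = 0 := by
      refine ⟨(f0 x)⁻¹ • f0, ?_, ?_⟩
      · simp [hf0x]
      · intro y hy
        have : f0 y = 0 := hf0 hy
        simp [this]
    have hfM : ∀ y ∈ M, f y = 0 := fun y hy => hf y (Submodule.mem_sup_left hy)
    have hfJx : f (J x) = 0 :=
      hf _ (Submodule.mem_sup_right (Submodule.mem_span_singleton_self _))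
    have hJx : J x ∈ z₀ := hz₀J ⟨x, hx, rfl⟩
    have hcen : ∀ m ∈ Submodule.span ℝ {x, J x}, m ∈ LieAlgebra.center ℝ L := by
      intro m hm
      obtain ⟨a, b, rfl⟩ := Submodule.mem_span_pair.1 hm
      exact add_mem ((LieAlgebra.center ℝ L).smul_mem a (hz₀u hx))
        ((LieAlgebra.center ℝ L).smul_mem b (hz₀u hJx))
    have hcen0 : ∀ m ∈ Submodule.span ℝ {x, J x}, ∀ y : L, ⁅y, m⁆ = 0 := by
      intro m hm y
      exact (LieModule.mem_maxTrivSubmodule ℝ L L m).1 (hcen m hm) y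
    let a : LieIdeal ℝ L :=
      { Submodule.span ℝ {x, J x} with
        lie_mem := by
          intro y m hm
          have := hcen0 m hm y
          rw [this]
          exact (Submodule.span ℝ {x, J x}).zero_mem }
    let n₁ : LieIdeal ℝ L :=
      { LinearMap.ker f ⊓ LinearMap.ker (f ∘ₗ J) with
        lie_mem := by
          intro y m hm
          have h : ⁅y, m⁆ ∈ M := Submodule.mem_sup_left (hcomm y m)
          exact ⟨hfM _ h, hfM _ (hMJ _ h)⟩ }
    have han : (a : Submodule ℝ L) = Submodule.span ℝ {x, J x} := rfl
    have hnn : (n₁ : Submodule ℝ L) = LinearMap.ker f ⊓ LinearMap.ker (f ∘ₗ J) := rfl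
    have hbot : a = ⊥ := by
      apply hfac a n₁
      · rw [han]
        rintro _ ⟨m, hm, rfl⟩
        obtain ⟨p, q, rfl⟩ := Submodule.mem_span_pair.1 hm
        refine Submodule.mem_span_pair.2 ⟨-q, p, ?_⟩
        simp only [map_add, map_smul, hJJ]
        module
      · rw [LieSubmodule.lie_eq_bot_iff]
        intro y _ m hm
        exact hcen0 m hm y
      · rw [hnn]
        rintro _ ⟨m, ⟨h1, h2⟩, rfl⟩
        refine ⟨h2, ?_⟩
        have h1' : f m = 0 := h1
        simp [hJJ, h1']
      · rw [han, hnn]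
        constructor
        · rw [Submodule.disjoint_def]
          rintro m hm ⟨h1, h2⟩
          obtain ⟨p, q, rfl⟩ := Submodule.mem_span_pair.1 hm
          have h1' : f (p • x + q • J x) = 0 := h1
          have h2' : f (J (p • x + q • J x)) = 0 := h2
          simp [hfx, hfJx, hJJ] at h1' h2'
          simp [h1', h2']
        · rw [codisjoint_iff, eq_top_iff]
          intro v _
          refine Submodule.mem_sup.2 ⟨f v • x + (-f (J v)) • J x,
            Submodule.mem_span_pair.2 ⟨_, _, rfl⟩,
            v - (f v • x + (-f (J v)) • J x), ⟨?_, ?_⟩, by abel⟩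
          · change f _ = 0
            simp [hfx, hfJx]
          · change f (J _) = 0
            simp [hfx, hfJx, hJJ]
    have hxa : x ∈ a := Submodule.subset_span (by simp)
    rw [hbot, LieSubmodule.mem_bot] at hxa
    exact hxM (hxa ▸ M.zero_mem)
  · refine sup_le hz₀l ?_
    exact (Submodule.map_mono hz₀l).trans hz₀J
end

section
/- Let 𝔫 be a 2-step nilpotent Lie algebra. If J is an abelian complex structure on 𝔫 (i.e., [Jx,Jy]=[x,y] for all x,y) or a bi-invariant complex structure (i.e., J[x,y]=[x,Jy] for all x,y), then J is 2-step, i.e., J𝔫'⊆𝔷. -/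
variable {L : Type*} [LieRing L] [LieAlgebra ℝ L]

/-- on a 2-step nilpotent Lie algebra, any abelian or bi-invariant
complex structure is 2-step, i.e. `J𝔫' ⊆ 𝔷`. -/
theorem abelian_or_biinvariant_complex_structure_is_two_step
    (h2 : commutatorIdeal L ≤ LieAlgebra.center ℝ L)
    (hna : commutatorIdeal L ≠ ⊥)
    (J : L →ₗ[ℝ] L) (hJ : IsComplexStructure J)
    (h : (∀ x y : L, ⁅J x, J y⁆ = ⁅x, y⁆) ∨ (∀ x y : L, J ⁅x, y⁆ = ⁅x, J y⁆)) :
    Submodule.map J (commutatorIdeal L : Submodule ℝ L) ≤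
      (LieAlgebra.center ℝ L : Submodule ℝ L) := by
  rintro _ ⟨z, hz, rfl⟩
  have hz' : ∀ w : L, ⁅w, z⁆ = 0 := (LieModule.mem_maxTrivSubmodule ℝ L L z).1 (h2 hz)
  refine (LieModule.mem_maxTrivSubmodule ℝ L L (J z)).2 fun w => ?_
  rcases h with h | h
  · rw [← h w (J z), hJ.1 z, lie_neg, hz', neg_zero]
  · rw [← h w z, hz', map_zero]
end

section
/- Let 𝔫 be a 2-step nilpotent Lie algebra with a complex structure J, with center 𝔷 and commutator 𝔫'. If 𝔷₀ is an ideal of 𝔫 such that 𝔫'⊆𝔷₀⊆𝔷, then J𝔷₀ is an abelian ideal of 𝔫. -/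
variable {L : Type*} [LieRing L] [LieAlgebra ℝ L]

/-- if `𝔫' ⊆ 𝔷₀ ⊆ 𝔷` is an ideal of a 2-step nilpotent Lie algebra with
complex structure `J`, then `J𝔷₀` is an abelian ideal. -/
theorem map_J_central_ideal_is_abelian_ideal
    (h2 : commutatorIdeal L ≤ LieAlgebra.center ℝ L)
    (hna : commutatorIdeal L ≠ ⊥)
    (J : L →ₗ[ℝ] L) (hJ : IsComplexStructure J)
    (z₀ : LieIdeal ℝ L)
    (hz₀l : commutatorIdeal L ≤ z₀) (hz₀u : z₀ ≤ LieAlgebra.center ℝ L) :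
    (∀ x : L, ∀ y ∈ Submodule.map J (z₀ : Submodule ℝ L),
        ⁅x, y⁆ ∈ Submodule.map J (z₀ : Submodule ℝ L)) ∧
      (∀ x ∈ Submodule.map J (z₀ : Submodule ℝ L),
        ∀ y ∈ Submodule.map J (z₀ : Submodule ℝ L), ⁅x, y⁆ = 0) := by
  have hc : ∀ z ∈ z₀, ∀ x : L, ⁅x, z⁆ = 0 := by
    intro z hz x
    exact (LieModule.mem_maxTrivSubmodule ℝ L L z).1 (hz₀u hz) x
  have hc' : ∀ z ∈ z₀, ∀ x : L, ⁅z, x⁆ = 0 := by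
    intro z hz x
    rw [← lie_skew, hc z hz x, neg_zero]
  have hb : ∀ x y : L, ⁅x, y⁆ ∈ z₀ := fun x y =>
    hz₀l (LieSubmodule.lie_mem_lie (LieSubmodule.mem_top x) (LieSubmodule.mem_top y))
  obtain ⟨hJ2, hN⟩ := hJ
  constructor
  · rintro x _ ⟨z, hz, rfl⟩
    have hz' : z ∈ z₀ := hz
    refine ⟨⁅-J x, J z⁆, hb _ _, ?_⟩
    have h := hN (-J x) z
    rw [hc z hz', hc z hz', map_neg, hJ2, neg_neg, zero_add, zero_add] at h
    exact sub_eq_zero.1 h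
  · rintro _ ⟨w, hw, rfl⟩ _ ⟨z, hz, rfl⟩
    have hz' : z ∈ z₀ := hz
    have hw' : w ∈ z₀ := hw
    have h := hN w z
    rw [hc z hz', hc z hz', hc' w hw', add_zero, map_zero, add_zero, zero_sub] at h
    exact neg_eq_zero.1 h
end

section
/- Let 𝔫 be a 2-step nilpotent Lie algebra. Then any complex structure J on 𝔫 satisfies J𝔷∩𝔷≠0 (J is not strongly non-nilpotent). In particular dim 𝔷 ≥ 2. -/
variable {L : Type*} [LieRing L] [LieAlgebra ℝ L]

/-- no complex structure on a 2-step nilpotent Lie algebra is strongly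
non-nilpotent: `J𝔷 ∩ 𝔷 ≠ 0`; in particular `dim 𝔷 ≥ 2`. -/
theorem complex_structure_not_strongly_non_nilpotent
    [FiniteDimensional ℝ L]
    (h2 : commutatorIdeal L ≤ LieAlgebra.center ℝ L)
    (hna : commutatorIdeal L ≠ ⊥)
    (J : L →ₗ[ℝ] L) (hJ : IsComplexStructure J) :
    Submodule.map J (LieAlgebra.center ℝ L : Submodule ℝ L) ⊓
        (LieAlgebra.center ℝ L : Submodule ℝ L) ≠ ⊥ ∧
      2 ≤ Module.finrank ℝ (LieAlgebra.center ℝ L) := by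
  obtain ⟨hJ2, hN⟩ := hJ
  have hbr : ∀ x y : L, ⁅x, y⁆ ∈ LieAlgebra.center ℝ L := fun x y =>
    h2 (LieSubmodule.lie_mem_lie (LieSubmodule.mem_top x) (LieSubmodule.mem_top y))
  have hJ0 : ∀ x : L, J x = 0 → x = 0 := by
    intro x hx
    have := hJ2 x
    rw [hx, map_zero] at this
    exact (neg_eq_zero.mp this.symm)
  have hmem : ∀ c : L, c ∈ LieAlgebra.center ℝ L ↔ ∀ y : L, ⁅y, c⁆ = 0 := by
    intro c
    exact LieModule.mem_maxTrivSubmodule ..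
  have hcap : Submodule.map J (LieAlgebra.center ℝ L : Submodule ℝ L) ⊓
        (LieAlgebra.center ℝ L : Submodule ℝ L) ≠ ⊥ := by
    intro hbot
    have hz : ∀ v : L, v ∈ LieAlgebra.center ℝ L → J v ∈ LieAlgebra.center ℝ L → v = 0 := by
      intro v hv hJv
      apply hJ0
      have : J v ∈ Submodule.map J (LieAlgebra.center ℝ L : Submodule ℝ L) ⊓
        (LieAlgebra.center ℝ L : Submodule ℝ L) := ⟨⟨v, hv, rfl⟩, hJv⟩
      rw [hbot] at this
      exact this
    have hab : ∀ x y : L, ⁅J x, y⁆ + ⁅x, J y⁆ = 0 := by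
      intro x y
      apply hz _ (add_mem (hbr _ _) (hbr _ _))
      have h : J (⁅J x, y⁆ + ⁅x, J y⁆) = ⁅J x, J y⁆ - ⁅x, y⁆ := by
        have := hN x y
        rw [sub_eq_zero] at this
        rw [← this]; abel
      rw [h]
      exact sub_mem (hbr _ _) (hbr _ _)
    apply hna
    rw [LieSubmodule.eq_bot_iff]
    intro c hc
    have hcz := h2 hc
    apply hz c hcz
    rw [hmem]
    intro y
    have h1 := hab y c
    rwa [(hmem c).1 hcz, zero_add] at h1
  refine ⟨hcap, ?_⟩
  obtain ⟨w, ⟨⟨v, hv, rfl⟩, hw⟩, hne⟩ := Submodule.exists_mem_ne_zero_of_ne_bot hcap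
  have hv0 : v ≠ 0 := by
    rintro rfl
    exact hne (map_zero J)
  have hli : LinearIndependent ℝ
      ![(⟨v, hv⟩ : LieAlgebra.center ℝ L), (⟨J v, hw⟩ : LieAlgebra.center ℝ L)] := by
    rw [LinearIndependent.pair_iff]
    intro a b hab
    have e1 : a • v + b • J v = 0 := congrArg Subtype.val hab
    have e2 : a • J v - b • v = 0 := by
      have := congrArg J e1
      rw [map_add, map_smul, map_smul, hJ2, map_zero, smul_neg, ← sub_eq_add_neg] at this
      exact this
    have e3 : (a * a + b * b) • v = 0 := by
      have : (a * a + b * b) • v = a • (a • v + b • J v) - b • (a • J v - b • v) := by module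
      rw [this, e1, e2]; simp
    have e4 := (smul_eq_zero.mp e3).resolve_right hv0
    constructor <;> nlinarith [mul_self_nonneg a, mul_self_nonneg b]
  simpa using hli.fintype_card_le_finrank
end

section
/- Let 𝔫 be a 2-step nilpotent Lie algebra with dim 𝔷 = 2. Then any complex structure J on 𝔫 is 2-step, i.e., J𝔫'⊆𝔷. -/
variable {L : Type*} [LieRing L] [LieAlgebra ℝ L]

/-- on a 2-step nilpotent Lie algebra with 2-dimensional center, every
complex structure is 2-step: `J𝔫' ⊆ 𝔷`. -/
theorem complex_structure_is_two_step_of_finrank_center_eq_two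
    [FiniteDimensional ℝ L]
    (h2 : commutatorIdeal L ≤ LieAlgebra.center ℝ L)
    (hna : commutatorIdeal L ≠ ⊥)
    (hz : Module.finrank ℝ (LieAlgebra.center ℝ L) = 2)
    (J : L →ₗ[ℝ] L) (hJ : IsComplexStructure J) :
    Submodule.map J (commutatorIdeal L : Submodule ℝ L) ≤
      (LieAlgebra.center ℝ L : Submodule ℝ L) := by
  obtain ⟨hJ1, hJ2⟩ := hJ
  have hbr : ∀ x y : L, ⁅x, y⁆ ∈ LieAlgebra.center ℝ L := fun x y =>
    h2 (LieSubmodule.lie_mem_lie (LieSubmodule.mem_top x) (LieSubmodule.mem_top y))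
  have hc : ∀ w ∈ LieAlgebra.center ℝ L, ∀ y : L, ⁅y, w⁆ = 0 := fun w hw y =>
    (LieModule.mem_maxTrivSubmodule (R := ℝ) (L := L) (M := L) w).1 hw y
  suffices key : ∀ w ∈ LieAlgebra.center ℝ L, J w ∈ LieAlgebra.center ℝ L by
    rintro _ ⟨w, hw, rfl⟩
    exact key w (h2 hw)
  by_cases h : ∃ v : L, v ≠ 0 ∧ v ∈ LieAlgebra.center ℝ L ∧ J v ∈ LieAlgebra.center ℝ L
  · obtain ⟨v, hv0, hv, hJv⟩ := h
    have hli : LinearIndependent ℝ ![v, J v] := by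
      rw [LinearIndependent.pair_iff]
      intro a b hab
      have h' : a • J v - b • v = 0 := by
        have := congrArg J hab
        simpa [hJ1, sub_eq_add_neg] using this
      have hs : (a * a + b * b) • v = 0 := by
        have : (a * a + b * b) • v = a • (a • v + b • J v) - b • (a • J v - b • v) := by
          module
        rw [this, hab, h']; simp
      have hs' : a * a + b * b = 0 := (smul_eq_zero.1 hs).resolve_right hv0
      constructor <;> nlinarith [mul_self_nonneg a, mul_self_nonneg b]
    have hspan : Submodule.span ℝ (Set.range ![v, J v]) =
        (LieAlgebra.center ℝ L : Submodule ℝ L) := by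
      apply Submodule.eq_of_le_of_finrank_eq
      · rw [Submodule.span_le]
        rintro _ ⟨i, rfl⟩
        fin_cases i
        · exact hv
        · exact hJv
      · rw [finrank_span_eq_card hli]
        exact hz.symm
    intro w hw
    have hw' : w ∈ Submodule.span ℝ (Set.range ![v, J v]) := by
      rw [hspan]; exact hw
    rw [Matrix.range_cons, Matrix.range_cons, Matrix.range_empty, Set.union_empty,
      Set.singleton_union, Submodule.mem_span_pair] at hw'
    obtain ⟨a, b, rfl⟩ := hw'
    rw [map_add, map_smul, map_smul, hJ1]
    exact add_mem ((LieAlgebra.center ℝ L).smul_mem a hJv)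
      ((LieAlgebra.center ℝ L).smul_mem b (neg_mem hv))
  · intro w hw
    refine (LieModule.mem_maxTrivSubmodule (R := ℝ) (L := L) (M := L) _).2 fun y => ?_
    by_contra hne
    refine h ⟨⁅y, J w⁆, hne, hbr _ _, ?_⟩
    have h0 := hJ2 y w
    rw [hc w hw, hc w hw, zero_add, zero_add, sub_eq_zero] at h0
    rw [h0]
    exact hbr _ _
end

section
/- Let J be a 3-step complex structure on a 2-step nilpotent Lie algebra 𝔫. Then 𝔫'∩J𝔫' ≠ 0. -/
variable {L : Type*} [LieRing L] [LieAlgebra ℝ L]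

/-- a 3-step complex structure `J` on a 2-step nilpotent Lie algebra
satisfies `𝔫' ∩ J𝔫' ≠ 0`. -/
theorem three_step_inter_ne_bot
    (h2 : commutatorIdeal L ≤ LieAlgebra.center ℝ L)
    (hna : commutatorIdeal L ≠ ⊥)
    (J : L →ₗ[ℝ] L) (hJ : IsComplexStructure J)
    (hJ3 : ¬ Submodule.map J (commutatorIdeal L : Submodule ℝ L) ≤
      (LieAlgebra.center ℝ L : Submodule ℝ L)) :
    (commutatorIdeal L : Submodule ℝ L) ⊓
        Submodule.map J (commutatorIdeal L : Submodule ℝ L) ≠ ⊥ := by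
  obtain ⟨hJ1, hN⟩ := hJ
  intro hbot
  apply hJ3
  rintro _ ⟨z, hz, rfl⟩
  have hzc : z ∈ LieAlgebra.center ℝ L := h2 hz
  have hzc' : ∀ y : L, ⁅z, y⁆ = 0 := fun y => by
    rw [← lie_skew, (LieModule.mem_maxTrivSubmodule ℝ L L z).1 hzc y, neg_zero]
  have hmem : ∀ a b : L, ⁅a, b⁆ ∈ commutatorIdeal L := fun a b =>
    LieSubmodule.lie_mem_lie (LieSubmodule.mem_top a) (LieSubmodule.mem_top b)
  refine (LieModule.mem_maxTrivSubmodule ℝ L L (J z)).2 fun y => ?_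
  have h1 : J ⁅J z, y⁆ = ⁅J z, J y⁆ := by
    have h := hN z y
    rw [hzc' y, hzc' (J y), add_zero, zero_add] at h
    exact sub_eq_zero.1 h
  have h3 : ⁅J z, J y⁆ ∈ (commutatorIdeal L : Submodule ℝ L) ⊓
        Submodule.map J (commutatorIdeal L : Submodule ℝ L) :=
    ⟨hmem _ _, ⟨⁅J z, y⁆, hmem _ _, h1⟩⟩
  rw [hbot, Submodule.mem_bot] at h3
  rw [h3] at h1
  have h4 := hJ1 ⁅J z, y⁆
  rw [h1, map_zero] at h4
  rw [← lie_skew, ← h4]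
end

section
/- Let 𝔫 be a 2-step nilpotent Lie algebra admitting a 3-step complex structure. Then dim 𝔫' ≥ 3. -/
variable {L : Type*} [LieRing L] [LieAlgebra ℝ L]

/-- a 2-step nilpotent Lie algebra admitting a 3-step complex structure
has `dim 𝔫' ≥ 3`. -/
theorem finrank_commutator_ge_three_of_three_step
    [FiniteDimensional ℝ L]
    (h2 : commutatorIdeal L ≤ LieAlgebra.center ℝ L)
    (hna : commutatorIdeal L ≠ ⊥)
    (J : L →ₗ[ℝ] L) (hJ : IsComplexStructure J)
    (hJ3 : ¬ Submodule.map J (commutatorIdeal L : Submodule ℝ L) ≤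
      (LieAlgebra.center ℝ L : Submodule ℝ L)) :
    3 ≤ Module.finrank ℝ (commutatorIdeal L : Submodule ℝ L) := by
  obtain ⟨hJ1, hN⟩ := hJ
  have hmem : ∀ x y : L, ⁅x, y⁆ ∈ commutatorIdeal L := fun x y =>
    LieSubmodule.lie_mem_lie (LieSubmodule.mem_top x) (LieSubmodule.mem_top y)
  have hcen : ∀ x ∈ commutatorIdeal L, ∀ y : L, ⁅x, y⁆ = 0 := by
    intro x hx y
    have h := (LieModule.mem_maxTrivSubmodule ℝ L L x).1 (h2 hx) y
    rw [← lie_skew, h, neg_zero]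
  rw [SetLike.not_le_iff_exists] at hJ3
  obtain ⟨u, hu, huc⟩ := hJ3
  obtain ⟨z, hz, rfl⟩ := Submodule.mem_map.1 hu
  have hz' : z ∈ commutatorIdeal L := hz
  have hex : ∃ y : L, ⁅J z, y⁆ ≠ 0 := by
    by_contra hcon
    push Not at hcon
    apply huc
    refine (LieModule.mem_maxTrivSubmodule ℝ L L (J z)).2 fun y => ?_
    rw [← lie_skew, hcon, neg_zero]
  obtain ⟨y, hy⟩ := hex
  have hJw : J ⁅J z, y⁆ = ⁅J z, J y⁆ := by
    have h := hN z y
    rw [hcen z hz' y, hcen z hz' (J y), add_zero, zero_add, sub_eq_zero] at h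
    exact h
  have hw := hmem (J z) y
  have hw2 := hmem (J z) (J y)
  let v : Fin 3 → (commutatorIdeal L : Submodule ℝ L) :=
    ![⟨z, hz⟩, ⟨⁅J z, y⁆, hw⟩, ⟨⁅J z, J y⁆, hw2⟩]
  have hv : LinearIndependent ℝ v := by
    rw [Fintype.linearIndependent_iff]
    intro g hg
    have h0 : g 0 • z + g 1 • ⁅J z, y⁆ + g 2 • J ⁅J z, y⁆ = 0 := by
      rw [Fin.sum_univ_three] at hg
      have h := congrArg Subtype.val hg
      rw [hJw]
      exact h
    have h1 : g 0 • J z + g 1 • J ⁅J z, y⁆ - g 2 • ⁅J z, y⁆ = 0 := by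
      have h := congrArg J h0
      rw [map_add, map_add, map_smul, map_smul, map_smul, hJ1, map_zero, smul_neg,
        ← sub_eq_add_neg] at h
      exact h
    have ha : g 0 = 0 := by
      have h := congrArg (fun t => ⁅t, y⁆) h1
      have e1 : ⁅⁅J z, y⁆, y⁆ = 0 := hcen _ hw y
      have e2 : ⁅⁅J z, J y⁆, y⁆ = 0 := hcen _ hw2 y
      rw [hJw] at h
      simp only [sub_lie, add_lie, smul_lie, e1, e2, smul_zero, add_zero, sub_zero,
        zero_lie] at h
      exact (smul_eq_zero.1 h).resolve_right hy
    rw [ha, zero_smul, zero_add] at h0 h1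
    have hb : (g 1 * g 1 + g 2 * g 2) • ⁅J z, y⁆ = 0 := by
      have e : (g 1 * g 1 + g 2 * g 2) • ⁅J z, y⁆ =
          g 1 • (g 1 • ⁅J z, y⁆ + g 2 • J ⁅J z, y⁆)
            - g 2 • (g 1 • J ⁅J z, y⁆ - g 2 • ⁅J z, y⁆) := by
        module
      rw [e, h0, h1, smul_zero, smul_zero, sub_zero]
    have hb' := (smul_eq_zero.1 hb).resolve_right hy
    intro i
    fin_cases i
    · exact ha
    · change g 1 = 0
      nlinarith [mul_self_nonneg (g 1), mul_self_nonneg (g 2)]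
    · change g 2 = 0
      nlinarith [mul_self_nonneg (g 1), mul_self_nonneg (g 2)]
  simpa using hv.fintype_card_le_finrank
end

section
/- Let 𝔫 be a 2-step nilpotent Lie algebra such that 𝔫'=𝔷 and dim 𝔫' is odd. Then any complex structure on 𝔫 is 3-step, i.e., J𝔫'⊄𝔷. -/
variable {L : Type*} [LieRing L] [LieAlgebra ℝ L]

/-- if `𝔫' = 𝔷` is odd-dimensional in a 2-step nilpotent Lie algebra,
every complex structure is 3-step: `J𝔫' ⊄ 𝔷`. -/
theorem complex_structure_is_three_step_of_odd_commutator_eq_center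
    [FiniteDimensional ℝ L]
    (h2 : commutatorIdeal L ≤ LieAlgebra.center ℝ L)
    (hna : commutatorIdeal L ≠ ⊥)
    (heq : (commutatorIdeal L : Submodule ℝ L) = (LieAlgebra.center ℝ L : Submodule ℝ L))
    (hodd : Odd (Module.finrank ℝ (commutatorIdeal L : Submodule ℝ L)))
    (J : L →ₗ[ℝ] L) (hJ : IsComplexStructure J) :
    ¬ Submodule.map J (commutatorIdeal L : Submodule ℝ L) ≤
      (LieAlgebra.center ℝ L : Submodule ℝ L) := by
  intro h
  rw [← heq] at h
  have hm : ∀ x ∈ (commutatorIdeal L : Submodule ℝ L),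
      J x ∈ (commutatorIdeal L : Submodule ℝ L) :=
    fun x hx => h (Submodule.mem_map_of_mem hx)
  generalize (commutatorIdeal L : Submodule ℝ L) = V at hm hodd
  have hsq : (J.restrict hm) * (J.restrict hm) = (-1 : ℝ) • (1 : V →ₗ[ℝ] V) := by
    ext x
    simp [LinearMap.restrict_apply, hJ.1]
  have hd := congrArg LinearMap.det hsq
  rw [map_mul, LinearMap.det_smul, map_one, hodd.neg_one_pow] at hd
  nlinarith [mul_self_nonneg (LinearMap.det (J.restrict hm))]
end

section
/- Let 𝔫 be a 2-step nilpotent Lie algebra with complex structure J. If J is 3-step (J𝔫'⊄𝔷), then no Hermitian metric on (𝔫,J) is pluriclosed. -/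
variable {L : Type*} [LieRing L] [LieAlgebra ℝ L]

/-- A Hermitian inner product on `(L, J)`: a symmetric positive definite bilinear form
compatible with `J`. -/
def IsHermitianMetric (J : L →ₗ[ℝ] L) (B : LinearMap.BilinForm ℝ L) : Prop :=
  (∀ x y : L, B x y = B y x) ∧ (∀ x : L, x ≠ 0 → 0 < B x x) ∧
    ∀ x y : L, B (J x) (J y) = B x y

/-- The exterior derivative of the torsion 3-form `c` of the Bismut connection of a
left invariant Hermitian structure, evaluated on `(w,u,y,z)` (formula (2.4) of the
paper). -/
def dcForm (J : L →ₗ[ℝ] L) (B : LinearMap.BilinForm ℝ L) (w u y z : L) : ℝ :=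
  B ⁅J ⁅w, u⁆, J y⁆ z + B ⁅J y, J z⁆ ⁅w, u⁆ + B ⁅J z, J ⁅w, u⁆⁆ y
    - B ⁅J ⁅w, y⁆, J u⁆ z - B ⁅J u, J z⁆ ⁅w, y⁆ - B ⁅J z, J ⁅w, y⁆⁆ u
    + B ⁅J ⁅w, z⁆, J u⁆ y + B ⁅J u, J y⁆ ⁅w, z⁆ + B ⁅J y, J ⁅w, z⁆⁆ u
    + B ⁅J ⁅u, y⁆, J w⁆ z + B ⁅J w, J z⁆ ⁅u, y⁆ + B ⁅J z, J ⁅u, y⁆⁆ w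
    - B ⁅J ⁅u, z⁆, J w⁆ y - B ⁅J w, J y⁆ ⁅u, z⁆ - B ⁅J y, J ⁅u, z⁆⁆ w
    + B ⁅J ⁅y, z⁆, J w⁆ u + B ⁅J w, J u⁆ ⁅y, z⁆ + B ⁅J u, J ⁅y, z⁆⁆ w

/-- The Hermitian metric `B` is pluriclosed (SKT) for `J`: `dc = 0`. -/
def IsPluriclosed (J : L →ₗ[ℝ] L) (B : LinearMap.BilinForm ℝ L) : Prop :=
  ∀ w u y z : L, dcForm J B w u y z = 0

/-- if `J` is a 3-step complex structure (`J𝔫' ⊄ 𝔷`) on a 2-step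
nilpotent Lie algebra, then no Hermitian metric on `(𝔫, J)` is pluriclosed. -/
theorem no_pluriclosed_metric_of_three_step
    (h2 : commutatorIdeal L ≤ LieAlgebra.center ℝ L)
    (hna : commutatorIdeal L ≠ ⊥)
    (J : L →ₗ[ℝ] L) (hJ : IsComplexStructure J)
    (hJ3 : ¬ Submodule.map J (commutatorIdeal L : Submodule ℝ L) ≤
      (LieAlgebra.center ℝ L : Submodule ℝ L))
    (B : LinearMap.BilinForm ℝ L) (hB : IsHermitianMetric J B) :
    ¬ IsPluriclosed J B := by
  intro hP
  obtain ⟨hJJ, hN⟩ := hJ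
  obtain ⟨_, hpos, hBJ⟩ := hB
  apply hJ3
  rintro _ ⟨z, hz, rfl⟩
  have hzc : z ∈ LieAlgebra.center ℝ L := h2 hz
  have hz1 : ∀ x : L, ⁅x, z⁆ = 0 := (LieModule.mem_maxTrivSubmodule (R := ℝ) (L := L) (M := L) z).1 hzc
  have hz2 : ∀ x : L, ⁅z, x⁆ = 0 := fun x => by rw [← lie_skew, hz1, neg_zero]
  have c1 : ∀ a b x : L, ⁅x, ⁅a, b⁆⁆ = 0 := fun a b =>
    (LieModule.mem_maxTrivSubmodule (R := ℝ) (L := L) (M := L) _).1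
      (h2 (LieSubmodule.lie_mem_lie (LieSubmodule.mem_top a) (LieSubmodule.mem_top b)))
  have c2 : ∀ a b x : L, ⁅⁅a, b⁆, x⁆ = 0 := fun a b x => by rw [← lie_skew, c1, neg_zero]
  have hA : ∀ x : L, J ⁅x, J z⁆ = ⁅J x, J z⁆ := fun x => by
    have h := hN x z
    rw [hz1, hz1, zero_add, zero_add] at h
    exact sub_eq_zero.1 h
  have key : ∀ x : L, ⁅x, J z⁆ = 0 := fun x => by
    by_contra hne
    have h := hP x (J x) z (J z)
    have e1 : ⁅J ⁅x, J x⁆, J z⁆ = 0 := by rw [← hA, c2, map_zero]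
    have e2 : J ⁅J x, J z⁆ = -⁅x, J z⁆ := by rw [← hA, hJJ]
    have e3 : B ⁅J x, J z⁆ ⁅J x, J z⁆ = B ⁅x, J z⁆ ⁅x, J z⁆ := by rw [← hA, hBJ]
    have hp := hpos _ hne
    simp only [dcForm, e1, e2, e3, hA, hJJ, hz1, hz2, c1, c2, map_zero, map_neg, neg_lie, lie_neg,
      LinearMap.zero_apply, LinearMap.neg_apply, zero_lie, lie_zero, neg_zero] at h
    linarith
  exact (LieModule.mem_maxTrivSubmodule (R := ℝ) (L := L) (M := L) (J z)).2 key
end
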